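/- Let L be a finite lattice, let φ be a capacity on L, and let ψ : L → ℝ be a completely monotone capacity on L with Möbius inverse f_ψ. For w : 𝓛 × L → ℝ define B^{(φ,ψ)}(w) = max{Σ_{(V,y) ∈ 𝓛×L} γ(V,y) w(V,y)}, the maximum over all γ : 𝓛 × L → [0,∞) with Σ_{(V,y)} γ(V,y) = 1, Σ{γ(V,y) : (V,y) with x ∈ V} = φ(x) for all x ∈ L, and Σ{γ(V,y) : (V,y) with y ≤ y₀} = ψ(y₀) for all y₀ ∈ L; and define S_{(φ,ψ)}(w) = min{Σ_{y ∈ L} f_ψ(y) h(y) − S^φ(g)}, the minimum over all pairs (g, h) with g : 𝓛 → ℝ, h : L → ℝ and w(V,y) ≤ h(y) − g(V) for all (V,y) ∈ 𝓛 × L, where S^φ(g) = max{Σ_{x ∈ L} r_x φ(x) : r : L → ℝ with Σ_{x ∈ V} r_x ≤ g(V) for all V ∈ 𝓛}. Then B^{(φ,ψ)}(w) = S_{(φ,ψ)}(w) for every w : 𝓛 × L → ℝ. -/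

import Mathlib

/-!
The statement is strong linear programming duality with attainment on both sides.

By uniqueness of Möbius inversion (`eq_of_sum_le_eq`) the cdf constraints on `γ` say that its
second marginal is `f_ψ`, so the admissible `γ` form a polytope `γ ≥ 0`, `γ A = b`. It is bounded
because `⊤` lies in every nonempty up-set, so that the constraint at `x = ⊤` forces total mass
`φ(⊤) = 1`. It is nonempty: `φ` is the covering function of a random up-set, as one sees by peeling
off the level sets of `φ` (`exists_random_upset`), complete monotonicity of `ψ` gives `f_ψ ≥ 0`
(`mobius_nonneg`), and the product of the two laws is admissible.

A maximiser `γ` exists by compactness, and Farkas' lemma (`farkas`, `lp_duality`) yields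
multipliers `r`, `h` with `w(V,y) ≤ h(y) - Σ_{x ∈ V} r_x` and `Σ f_ψ h - Σ r φ` at most the optimal
value. With `g(V) = Σ_{x ∈ V} r_x` one has `S^φ(g) ≥ Σ r φ`, so `(g, h)` attains the bound. Weak
duality holds for all `(g, h)` because `S^φ(g) ≤ Σ_V q(V) g(V)` for every law `q` on `𝓛` with
covering function `φ`, in particular for the first marginal of an admissible `γ`.
-/

attribute [local instance 50] Classical.propDecidable

/-- `U` is a member of `𝓛`: a nonempty dual order ideal (up-set) of `L`. -/
def MemL {L : Type*} [Lattice L] (U : Finset L) : Prop :=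
  (∀ ⦃x y : L⦄, x ∈ U → x ≤ y → y ∈ U) ∧ U.Nonempty

/-- The family `𝓛` of nonempty up-sets of `L`, as a finset of finsets. -/
noncomputable def LFam (L : Type*) [Lattice L] [Fintype L] : Finset (Finset L) :=
  Finset.univ.filter (fun U => MemL U)

/-- The successive difference operator on `𝓛` (ordered by reverse inclusion, so that
the meet of two up-sets is their union): `∇_U Φ(W) = Φ(W) − Φ(W ⊓ U) = Φ(W) − Φ(W ∪ U)`,
iterated over a list. -/
def succDiffU {L : Type*} [Lattice L] [DecidableEq L]
    (Φ : Finset L → ℝ) (l : List (Finset L)) : Finset L → ℝ :=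
  l.foldl (fun Ψ U => fun W => Ψ W - Ψ (W ∪ U)) Φ

/-- `Φ ∈ M_∞(𝓛)`: `Φ` is nonnegative and completely monotone on `𝓛`
(the empty list gives nonnegativity of `Φ` itself). -/
def Minf {L : Type*} [Lattice L] [DecidableEq L] (Φ : Finset L → ℝ) : Prop :=
  ∀ l : List (Finset L), (∀ U ∈ l, MemL U) → ∀ W : Finset L, MemL W →
    0 ≤ succDiffU Φ l W

/-- The principal up-set `⟨x⟩* = {y ∈ L : y ≥ x}`. -/
noncomputable def pUp {L : Type*} [Lattice L] [Fintype L] (x : L) : Finset L :=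
  Finset.univ.filter (fun y => x ≤ y)

/-- The up-set `⟨A⟩*` generated by `A ⊆ L`. -/
noncomputable def upGen {L : Type*} [Lattice L] [Fintype L] (A : Finset L) : Finset L :=
  Finset.univ.filter (fun y => ∃ a ∈ A, a ≤ y)

/-- `φ ∈ M_1(L)`: `φ` is nonnegative and monotone. -/
def M1 {L : Type*} [Lattice L] (φ : L → ℝ) : Prop :=
  (∀ x, 0 ≤ φ x) ∧ Monotone φ

/-- `f` is the Möbius inverse of `Φ` on `𝓛`: `Φ(U) = Σ_{V ⪯ U} f(V)`,
where `V ⪯ U` means `U ⊆ V`. -/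
def IsMobiusInvL {L : Type*} [Lattice L] [Fintype L] (Φ f : Finset L → ℝ) : Prop :=
  ∀ U : Finset L, MemL U → Φ U = ∑ V ∈ (LFam L).filter (fun V => U ⊆ V), f V

/-- `φ` is a capacity on `L`: monotone with `φ(0̂) = 0` and `φ(1̂) = 1`. -/
def Capacity {L : Type*} [Lattice L] [BoundedOrder L] (φ : L → ℝ) : Prop :=
  Monotone φ ∧ φ ⊥ = 0 ∧ φ ⊤ = 1

/-- The successive difference operator `∇_{a_1,…,a_n} φ` on `L`. -/
def succDiff {L : Type*} [Lattice L] (φ : L → ℝ) (l : List L) : L → ℝ :=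
  l.foldl (fun ψ a => fun x => ψ x - ψ (x ⊓ a)) φ

/-- `φ` is completely monotone: all successive differences (`n ≥ 1`) are nonnegative. -/
def CMono {L : Type*} [Lattice L] (φ : L → ℝ) : Prop :=
  ∀ l : List L, l ≠ [] → ∀ x, 0 ≤ succDiff φ l x

/-- `f` is the Möbius inverse of `ψ` on `L`: `ψ(y) = Σ_{y' ≤ y} f(y')`. -/
def IsMobiusInv {L : Type*} [Lattice L] [Fintype L] (ψ f : L → ℝ) : Prop :=
  ∀ y : L, ψ y = ∑ y' ∈ Finset.univ.filter (fun y' => y' ≤ y), f y'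

/-- Farkas' lemma for finitely many linear functionals on an arbitrary real vector space. The
induction on `s` projects along a point violating the implication onto the kernel of the new
functional, so no topology is involved. -/
theorem farkas {E ι : Type*} [AddCommGroup E] [Module ℝ E] (s : Finset ι) :
    ∀ (a : ι → E →ₗ[ℝ] ℝ) (b : E →ₗ[ℝ] ℝ), (∀ x, (∀ i ∈ s, 0 ≤ a i x) → 0 ≤ b x) →
      ∃ c : ι → ℝ, (∀ i, 0 ≤ c i) ∧ b = ∑ i ∈ s, c i • a i := by
  classical
  induction s using Finset.induction_on with
  | empty =>
    intro a b hb
    refine ⟨0, fun _ => le_rfl, ?_⟩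
    ext x
    have h1 := hb x (by simp)
    have h2 := hb (-x) (by simp)
    rw [map_neg] at h2
    simp only [Finset.sum_empty, LinearMap.zero_apply]
    linarith
  | insert j s hj ih =>
    intro a b hb
    by_cases hs : ∀ x, (∀ i ∈ s, 0 ≤ a i x) → 0 ≤ b x
    · obtain ⟨c, hc, hbc⟩ := ih a b hs
      refine ⟨Function.update c j 0, fun i => ?_, ?_⟩
      · by_cases h : i = j
        · subst h; simp
        · simp [h, hc i]
      · rw [Finset.sum_insert hj, Function.update_self, zero_smul, zero_add, hbc]
        refine Finset.sum_congr rfl fun i hi => ?_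
        rw [Function.update_of_ne (by rintro rfl; exact hj hi)]
    · push Not at hs
      obtain ⟨x₁, hx₁, hbx₁⟩ := hs
      have haj : a j x₁ < 0 := by
        by_contra! h
        exact absurd (hb x₁ (by simpa using ⟨h, hx₁⟩)) (not_le.mpr hbx₁)
      -- rescale the violating point so that `a j` takes the value `-1` there
      obtain ⟨x₀, hx₀, hbx₀, haj₀⟩ : ∃ x₀, (∀ i ∈ s, 0 ≤ a i x₀) ∧ b x₀ < 0 ∧ a j x₀ = -1 := by
        have hpos : 0 < (-a j x₁)⁻¹ := inv_pos.mpr (by linarith)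
        refine ⟨(-a j x₁)⁻¹ • x₁, fun i hi => ?_, ?_, ?_⟩
        · rw [map_smul, smul_eq_mul]; exact mul_nonneg hpos.le (hx₁ i hi)
        · rw [map_smul, smul_eq_mul]; exact mul_neg_of_pos_of_neg hpos hbx₁
        · rw [map_smul, smul_eq_mul]; field_simp [haj.ne]
      obtain ⟨c, hc, hbc⟩ := ih (fun i => a i + a i x₀ • a j) (b + b x₀ • a j) (by
        intro x hx
        have h := hb (x + a j x • x₀) (by
          intro i hi
          rcases Finset.mem_insert.mp hi with rfl | hi
          · simp [haj₀]
          · have := hx i hi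
            simp only [LinearMap.add_apply, LinearMap.smul_apply, smul_eq_mul] at this
            simp only [map_add, map_smul, smul_eq_mul]
            linarith)
        simp only [map_add, map_smul, smul_eq_mul] at h
        simp only [LinearMap.add_apply, LinearMap.smul_apply, smul_eq_mul]
        linarith)
      refine ⟨Function.update c j (∑ i ∈ s, c i * a i x₀ - b x₀), fun i => ?_, ?_⟩
      · by_cases h : i = j
        · subst h
          have := Finset.sum_nonneg fun i hi => mul_nonneg (hc i) (hx₀ i hi)
          simp only [Function.update_self]
          linarith
        · simp [h, hc i]
      · rw [Finset.sum_insert hj, Function.update_self]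
        have : ∑ i ∈ s, Function.update c j (∑ i ∈ s, c i * a i x₀ - b x₀) i • a i
            = ∑ i ∈ s, c i • a i := by
          refine Finset.sum_congr rfl fun i hi => ?_
          rw [Function.update_of_ne (by rintro rfl; exact hj hi)]
        rw [this]
        ext x
        have h := LinearMap.congr_fun hbc x
        simp only [LinearMap.add_apply, LinearMap.smul_apply, smul_eq_mul, LinearMap.sum_apply,
          mul_add, Finset.sum_add_distrib] at h ⊢
        rw [sub_mul, Finset.sum_mul]
        simp only [← mul_assoc] at h
        linarith

/-- Strong duality, with both optima attained, for maximising `γ · c` subject to `γ ≥ 0` and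
`γ A = b`, when the feasible set is nonempty and bounded. Only the coordinates in `s` enter the
sums; those outside `s` are unconstrained apart from their sign. -/
theorem lp_duality {J K : Type*} [Fintype K] [DecidableEq K] (s : Finset J)
    (A : J → K → ℝ) (b : K → ℝ) (c : J → ℝ) (M : ℝ)
    (hne : ∃ γ : J → ℝ, (∀ j, 0 ≤ γ j) ∧ ∀ k, ∑ j ∈ s, γ j * A j k = b k)
    (hbd : ∀ γ : J → ℝ, (∀ j, 0 ≤ γ j) → (∀ k, ∑ j ∈ s, γ j * A j k = b k) →
      ∀ j ∈ s, γ j ≤ M) :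
    ∃ (γ : J → ℝ) (z : K → ℝ), (∀ j, 0 ≤ γ j) ∧ (∀ k, ∑ j ∈ s, γ j * A j k = b k) ∧
      (∀ j ∈ s, c j ≤ ∑ k, z k * A j k) ∧ ∑ k, z k * b k ≤ ∑ j ∈ s, γ j * c j := by
  classical
  -- a maximiser exists: coordinates outside `s` may be set to `0`, which leaves a compact set
  obtain ⟨γ₀, h0, hA, hmax⟩ : ∃ γ₀ : J → ℝ, (∀ j, 0 ≤ γ₀ j) ∧
      (∀ k, ∑ j ∈ s, γ₀ j * A j k = b k) ∧
      ∀ γ : J → ℝ, (∀ j, 0 ≤ γ j) → (∀ k, ∑ j ∈ s, γ j * A j k = b k) →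
        ∑ j ∈ s, γ j * c j ≤ ∑ j ∈ s, γ₀ j * c j := by
    have trunc : ∀ (γ : J → ℝ) (d : J → ℝ),
        ∑ j ∈ s, (if j ∈ s then γ j else 0) * d j = ∑ j ∈ s, γ j * d j := fun γ d =>
      Finset.sum_congr rfl fun j hj => by rw [if_pos hj]
    let P : Set (J → ℝ) := {γ | ∀ k, ∑ j ∈ s, γ j * A j k = b k} ∩
      Set.univ.pi fun j => Set.Icc 0 (if j ∈ s then M else 0)
    have hPc : IsCompact P := by
      refine (isCompact_univ_pi fun j => isCompact_Icc).inter_left ?_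
      simp only [Set.ofPred_forall]
      exact isClosed_iInter fun k => isClosed_eq (by fun_prop) (by fun_prop)
    have hmem : ∀ γ : J → ℝ, (∀ j, 0 ≤ γ j) → (∀ k, ∑ j ∈ s, γ j * A j k = b k) →
        (fun j => if j ∈ s then γ j else 0) ∈ P := by
      intro γ h1 h2
      refine ⟨fun k => by rw [trunc γ fun j => A j k]; exact h2 k, fun j _ => ?_⟩
      by_cases hj : j ∈ s
      · simpa [hj] using ⟨h1 j, hbd γ h1 h2 j hj⟩
      · simp [hj]
    obtain ⟨γ, h1, h2⟩ := hne
    obtain ⟨γ₀, hγ₀, hm⟩ := hPc.exists_isMaxOn ⟨_, hmem γ h1 h2⟩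
      (f := fun γ => ∑ j ∈ s, γ j * c j) (by fun_prop)
    refine ⟨γ₀, fun j => (hγ₀.2 j trivial).1, hγ₀.1, fun γ h1 h2 => ?_⟩
    have := hm (hmem γ h1 h2)
    simpa only [Set.mem_ofPred_eq, trunc γ c] using this
  set t := ∑ j ∈ s, γ₀ j * c j with ht
  by_contra hcon
  have hno : ∀ z : K → ℝ, (∀ j ∈ s, c j ≤ ∑ k, z k * A j k) → t < ∑ k, z k * b k := by
    intro z hz
    by_contra! h
    exact hcon ⟨γ₀, z, h0, hA, hz, h⟩
  -- homogenise the infeasible system `z · A j ≥ c j`, `z · b ≤ t` with a variable `τ`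
  let ev : (K → ℝ) → (K → ℝ) × ℝ →ₗ[ℝ] ℝ := fun v =>
    (∑ k, v k • LinearMap.proj k) ∘ₗ LinearMap.fst ℝ (K → ℝ) ℝ
  have hev : ∀ v x, ev v x = ∑ k, x.1 k * v k := by
    intro v x
    simp [ev, mul_comm]
  let τ : (K → ℝ) × ℝ →ₗ[ℝ] ℝ := LinearMap.snd ℝ (K → ℝ) ℝ
  have hτ : ∀ x, τ x = x.2 := fun x => rfl
  obtain ⟨p, hp, hpe⟩ := farkas (Finset.insertNone s)
    (fun o => o.elim (t • τ - ev b) fun j => ev (A j) - c j • τ) (-τ) (by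
      intro x hx
      rw [LinearMap.neg_apply, hτ]
      by_contra! hlt
      have hpos : 0 < x.2 := by linarith
      have hn := hx none (by simp)
      simp only [Option.elim, LinearMap.sub_apply, LinearMap.smul_apply, smul_eq_mul, hev, hτ] at hn
      have := hno (fun k => x.2⁻¹ * x.1 k) (by
        intro j hj
        have := hx (some j) (by simpa using hj)
        simp only [Option.elim, LinearMap.sub_apply, LinearMap.smul_apply, smul_eq_mul, hev, hτ]
          at this
        simp only [mul_assoc]
        rw [← Finset.mul_sum, le_inv_mul_iff₀ hpos]
        linarith)
      simp only [mul_assoc] at this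
      rw [← Finset.mul_sum, lt_inv_mul_iff₀ hpos] at this
      linarith)
  have key : ∀ x : (K → ℝ) × ℝ, -x.2 = p none * (t * x.2 - ∑ k, x.1 k * b k) +
      ∑ j ∈ s, p (some j) * (∑ k, x.1 k * A j k - c j * x.2) := by
    intro x
    have := LinearMap.congr_fun hpe x
    simpa [hev, hτ, Finset.sum_insertNone] using this
  have hval : ∑ j ∈ s, p (some j) * c j = 1 + p none * t := by
    have := key (0, 1)
    simp at this
    linarith
  have hfeas : ∀ k, ∑ j ∈ s, p (some j) * A j k = p none * b k := by
    intro k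
    have := key (Pi.single k 1, 0)
    simp [Pi.single_apply] at this
    linarith
  -- `γ₀` plus the certificate, divided by `1 + p none`, is feasible and beats `γ₀`, also when `p none = 0`
  have hd : 0 < 1 + p none := by linarith [hp none]
  have := hmax (fun j => (1 + p none)⁻¹ * (γ₀ j + p (some j)))
    (fun j => mul_nonneg (inv_pos.mpr hd).le (add_nonneg (h0 j) (hp _))) (by
      intro k
      simp only [mul_assoc, add_mul]
      rw [← Finset.mul_sum, Finset.sum_add_distrib, hA, hfeas]
      field_simp)
  simp only [mul_assoc, add_mul] at this
  rw [← Finset.mul_sum, Finset.sum_add_distrib, hval, inv_mul_le_iff₀ hd, ← ht] at this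
  linarith

/-- Uniqueness of Möbius inverses on `L`. -/
theorem eq_of_sum_le_eq {L : Type*} [Lattice L] [Fintype L] (f g : L → ℝ)
    (h : ∀ y₀ : L, ∑ y ∈ Finset.univ.filter (fun y => y ≤ y₀), f y =
      ∑ y ∈ Finset.univ.filter (fun y => y ≤ y₀), g y) : f = g := by
  classical
  funext y₀
  induction y₀ using WellFoundedLT.induction with
  | ind y₀ ih =>
    have hsplit : ∀ u : L → ℝ, ∑ y ∈ Finset.univ.filter (fun y => y ≤ y₀), u y =
        u y₀ + ∑ y ∈ Finset.univ.filter (fun y => y < y₀), u y := by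
      intro u
      rw [← Finset.sum_insert (by simp)]
      refine Finset.sum_congr ?_ fun _ _ => rfl
      ext y
      simp [le_iff_eq_or_lt]
    have h1 := h y₀
    rw [hsplit f, hsplit g, Finset.sum_congr rfl fun y hy => ih y (Finset.mem_filter.mp hy).2] at h1
    linarith

/-- A successive difference is the total Möbius mass of the elements below `x` that lie below
none of the `a ∈ l`. -/
theorem succDiff_eq_sum {L : Type*} [Lattice L] [Fintype L] (ψ f : L → ℝ)
    (hf : IsMobiusInv ψ f) (l : List L) : ∀ x, succDiff ψ l x =
      ∑ y ∈ Finset.univ.filter (fun y => y ≤ x ∧ ∀ a ∈ l, ¬ y ≤ a), f y := by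
  classical
  induction l using List.reverseRecOn with
  | nil =>
    intro x
    simpa [succDiff] using hf x
  | append_singleton l a ih =>
    intro x
    have h1 : succDiff ψ (l ++ [a]) x = succDiff ψ l x - succDiff ψ l (x ⊓ a) := by
      simp [succDiff]
    rw [h1, ih, ih, sub_eq_iff_eq_add, Finset.sum_filter, Finset.sum_filter, Finset.sum_filter,
      ← Finset.sum_add_distrib]
    refine Finset.sum_congr rfl fun y _ => ?_
    by_cases hx : y ≤ x <;> by_cases ha : y ≤ a <;> by_cases hl : ∀ b ∈ l, ¬ y ≤ b <;>
      simp [hx, ha, hl, or_imp, forall_and]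

/-- The Möbius inverse of a completely monotone capacity is nonnegative: differencing along all
`a` with `¬ x ≤ a` isolates the mass at `x`. -/
theorem mobius_nonneg {L : Type*} [Lattice L] [Fintype L] [BoundedOrder L] (ψ f : L → ℝ)
    (hψ : Capacity ψ) (hcm : CMono ψ) (hf : IsMobiusInv ψ f) (x : L) : 0 ≤ f x := by
  classical
  let l : List L := (Finset.univ.filter fun a => ¬ x ≤ a).toList
  have hsum : succDiff ψ l x = f x := by
    rw [succDiff_eq_sum ψ f hf]
    have : (Finset.univ.filter fun y => y ≤ x ∧ ∀ a ∈ l, ¬ y ≤ a) = {x} := by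
      ext y
      simp only [l, Finset.mem_toList, Finset.mem_filter, Finset.mem_univ, true_and,
        Finset.mem_singleton]
      constructor
      · rintro ⟨h1, h2⟩
        exact le_antisymm h1 (by by_contra h; exact h2 y h le_rfl)
      · rintro rfl
        exact ⟨le_rfl, fun a h => h⟩
    rw [this, Finset.sum_singleton]
  by_cases hl : l = []
  -- only `x = ⊥` lies below everything, and there the empty difference is `ψ ⊥ = 0`
  · have hx : x ≤ ⊥ := by
      by_contra h
      have : (⊥ : L) ∈ l := by simpa [l] using h
      simp [hl] at this
    rw [← hsum, hl, le_bot_iff.mp hx]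
    simp [succDiff, hψ.2.1]
  · rw [← hsum]
    exact hcm l hl x

theorem top_mem_of_mem_LFam {L : Type*} [Lattice L] [Fintype L] [BoundedOrder L]
    {V : Finset L} (hV : V ∈ LFam L) : ⊤ ∈ V := by
  obtain ⟨hup, x, hx⟩ : MemL V := by simpa [LFam] using hV
  exact hup hx le_top

/-- A nonnegative monotone `φ` is the covering function of a nonnegative weight on up-sets. The
induction is on the size of the support of `φ`, which is itself an up-set: it receives as weight
the minimum of `φ` on it, and subtracting that minimum shrinks the support. -/
theorem exists_random_upset {L : Type*} [Lattice L] [Fintype L] [DecidableEq L] (n : ℕ) :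
    ∀ φ : L → ℝ, (∀ x, 0 ≤ φ x) → Monotone φ →
      (Finset.univ.filter fun x => φ x ≠ 0).card = n →
      ∃ p : Finset L → ℝ, (∀ V, 0 ≤ p V) ∧
        ∀ x, ∑ V ∈ (LFam L).filter (fun V => x ∈ V), p V = φ x := by
  induction n using Nat.strong_induction_on with
  | _ n ih =>
    intro φ h0 hmono hcard
    set S := Finset.univ.filter fun x => φ x ≠ 0 with hS
    have hmem : ∀ x, x ∈ S ↔ φ x ≠ 0 := by simp [hS]
    by_cases hne : S.Nonempty
    · obtain ⟨x₀, hx₀, hmin⟩ := S.exists_min_image φ hne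
      have hSL : S ∈ LFam L := by
        simp only [LFam, Finset.mem_filter, Finset.mem_univ, true_and]
        refine ⟨fun x y hx hxy => ?_, hne⟩
        rw [hmem] at hx ⊢
        have := lt_of_le_of_ne (h0 x) (Ne.symm hx)
        exact (this.trans_le (hmono hxy)).ne'
      let φ' : L → ℝ := fun x => if x ∈ S then φ x - φ x₀ else 0
      have hlt : (Finset.univ.filter fun x => φ' x ≠ 0).card < n := by
        rw [← hcard]
        refine Finset.card_lt_card ⟨fun x hx => ?_, fun h => ?_⟩
        · by_contra hxS
          simp [φ', hxS] at hx
        · have := h hx₀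
          simp [φ'] at this
      obtain ⟨p, hp, hpe⟩ := ih _ hlt φ' (by
          intro x
          by_cases hx : x ∈ S
          · simpa [φ', hx] using hmin x hx
          · simp [φ', hx]) (by
          intro x y hxy
          by_cases hx : x ∈ S
          · have hy : y ∈ S := (by simpa [LFam] using hSL : MemL S).1 hx hxy
            simpa [φ', hx, hy] using hmono hxy
          · by_cases hy : y ∈ S
            · simpa [φ', hx, hy] using hmin y hy
            · simp [φ', hx, hy]) rfl
      refine ⟨fun V => p V + if V = S then φ x₀ else 0, fun V => ?_, fun x => ?_⟩
      · have := hp V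
        have := h0 x₀
        dsimp only
        split_ifs <;> linarith
      · rw [Finset.sum_add_distrib, hpe, Finset.sum_ite_eq']
        by_cases hx : x ∈ S
        · simp [φ', hx, hSL]
        · have : φ x = 0 := by
            by_contra h
            exact hx ((hmem x).2 h)
          simp [φ', hx, this]
    · refine ⟨0, fun _ => le_rfl, fun x => ?_⟩
      have : φ x = 0 := by
        by_contra h
        exact hne ⟨x, (hmem x).2 h⟩
      simp [this]

/-- If `q` has covering function `φ`, then `Σ r φ` is the `q`-sum of `V ↦ Σ_{x ∈ V} r_x`. -/
theorem sum_marginal {L : Type*} [Lattice L] [Fintype L] [DecidableEq L]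
    (φ : L → ℝ) (q : Finset L → ℝ)
    (hq : ∀ x, ∑ V ∈ (LFam L).filter (fun V => x ∈ V), q V = φ x) (r : L → ℝ) :
    ∑ x, r x * φ x = ∑ V ∈ LFam L, q V * ∑ x ∈ V, r x := by
  simp only [← hq, Finset.sum_filter, Finset.mul_sum]
  rw [Finset.sum_comm]
  refine Finset.sum_congr rfl fun V _ => ?_
  simp [mul_comm, Finset.sum_ite_mem]

/-- Duality for the joint marginal problem: for a capacity `φ`, a completely monotone
capacity `ψ` with Möbius inverse `f_ψ`, and every `w : 𝓛 × L → ℝ`, the maximum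
`B^{(φ,ψ)}(w)` of `Σ γ(V,y) w(V,y)` over joint pmfs `γ` on `𝓛 × L` with marginals
`φ` (via `x ∈ 𝒳`) and `ψ` (via cdf) equals the minimum `S_{(φ,ψ)}(w)` of
`Σ_y f_ψ(y) h(y) − S^φ(g)` over pairs `(g, h)` with `w(V,y) ≤ h(y) − g(V)`, where
`S^φ(g) = max{Σ_x r_x φ(x) : Σ_{x ∈ V} r_x ≤ g(V) for all V ∈ 𝓛}`. -/
theorem stmt_18 {L : Type*} [Lattice L] [Fintype L] [BoundedOrder L] [DecidableEq L]
    (φ ψ fψ : L → ℝ) (hφ : Capacity φ) (hψ : Capacity ψ) (hψcm : CMono ψ)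
    (hfψ : IsMobiusInv ψ fψ) (w : Finset L → L → ℝ) :
    ∃ t : ℝ,
      IsGreatest {s : ℝ | ∃ γ : Finset L → L → ℝ, (∀ V y, 0 ≤ γ V y) ∧
        (∑ V ∈ LFam L, ∑ y : L, γ V y) = 1 ∧
        (∀ x : L, (∑ V ∈ (LFam L).filter (fun V => x ∈ V), ∑ y : L, γ V y) = φ x) ∧
        (∀ y₀ : L,
          (∑ V ∈ LFam L, ∑ y ∈ Finset.univ.filter (fun y => y ≤ y₀), γ V y) = ψ y₀) ∧
        s = ∑ V ∈ LFam L, ∑ y : L, γ V y * w V y} t ∧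
      IsLeast {s : ℝ | ∃ g : Finset L → ℝ, ∃ h : L → ℝ,
        (∀ V ∈ LFam L, ∀ y : L, w V y ≤ h y - g V) ∧
        s = (∑ y : L, fψ y * h y) -
          sSup {u : ℝ | ∃ r : L → ℝ, (∀ V ∈ LFam L, (∑ x ∈ V, r x) ≤ g V) ∧
            u = ∑ x : L, r x * φ x}} t := by
  classical
  have hf0 := mobius_nonneg ψ fψ hψ hψcm hfψ
  have hφ0 : ∀ x, 0 ≤ φ x := fun x => hφ.2.1 ▸ hφ.1 bot_le
  have hftot : ∑ y, fψ y = 1 := by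
    have := hfψ ⊤
    rw [hψ.2.2] at this
    simpa using this.symm
  have htot : ∀ q : Finset L → ℝ,
      (∀ x, ∑ V ∈ (LFam L).filter (fun V => x ∈ V), q V = φ x) → ∑ V ∈ LFam L, q V = 1 := by
    intro q hq
    rw [← hφ.2.2, ← hq ⊤, Finset.filter_true_of_mem fun V hV => top_mem_of_mem_LFam hV]
  obtain ⟨p, hp, hpφ⟩ := exists_random_upset _ φ hφ0 hφ.1 rfl
  -- the coupling polytope in the standard form `γ ≥ 0`, `γ A = b`
  let s : Finset (Finset L × L) := LFam L ×ˢ Finset.univ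
  let A : Finset L × L → L ⊕ L → ℝ := fun j =>
    Sum.elim (fun x => if x ∈ j.1 then 1 else 0) (fun y => if j.2 = y then 1 else 0)
  have hAl : ∀ (γ : Finset L × L → ℝ) x, ∑ j ∈ s, γ j * A j (Sum.inl x) =
      ∑ V ∈ (LFam L).filter (fun V => x ∈ V), ∑ y, γ (V, y) := by
    intro γ x
    rw [Finset.sum_product, Finset.sum_filter]
    refine Finset.sum_congr rfl fun V _ => ?_
    by_cases hx : x ∈ V <;> simp [A, hx]
  have hAr : ∀ (γ : Finset L × L → ℝ) y, ∑ j ∈ s, γ j * A j (Sum.inr y) =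
      ∑ V ∈ LFam L, γ (V, y) := by
    intro γ y
    rw [Finset.sum_product]
    refine Finset.sum_congr rfl fun V _ => ?_
    simp [A]
  obtain ⟨γ, z, hγ0, hγA, hz, hzt⟩ := lp_duality s A (Sum.elim φ fψ) (fun j => w j.1 j.2) 1
    ⟨fun j => p j.1 * fψ j.2, fun j => mul_nonneg (hp _) (hf0 _), by
      rintro (x | y)
      · rw [hAl]
        simp only [← Finset.mul_sum, hftot, mul_one, hpφ, Sum.elim_inl]
      · rw [hAr]
        simp only [← Finset.sum_mul, htot p hpφ, one_mul, Sum.elim_inr]⟩ (by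
      intro γ h0 hA j hj
      have hone : ∑ V ∈ LFam L, ∑ y, γ (V, y) = 1 :=
        htot (fun V => ∑ y, γ (V, y)) fun x => by rw [← hAl, hA]; rfl
      rw [← Finset.sum_product'] at hone
      rw [← hone]
      exact Finset.single_le_sum (f := γ) (fun i _ => h0 i) hj)
  have hγφ : ∀ x, ∑ V ∈ (LFam L).filter (fun V => x ∈ V), ∑ y, γ (V, y) = φ x := fun x => by
    rw [← hAl, hγA]; rfl
  have hγf : ∀ y, ∑ V ∈ LFam L, γ (V, y) = fψ y := fun y => by
    rw [← hAr, hγA]; rfl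
  -- `S^φ(g)` is finite and bounded by the expectation of `g` under any law with marginal `φ`
  let R : (Finset L → ℝ) → Set ℝ := fun g =>
    {u : ℝ | ∃ r : L → ℝ, (∀ V ∈ LFam L, (∑ x ∈ V, r x) ≤ g V) ∧ u = ∑ x : L, r x * φ x}
  have hR : ∀ (q : Finset L → ℝ), (∀ V, 0 ≤ q V) →
      (∀ x, ∑ V ∈ (LFam L).filter (fun V => x ∈ V), q V = φ x) → ∀ g, ∀ u ∈ R g,
      u ≤ ∑ V ∈ LFam L, q V * g V := by
    rintro q hq hqφ g u ⟨r, hr, rfl⟩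
    rw [sum_marginal φ q hqφ r]
    exact Finset.sum_le_sum fun V hV => mul_le_mul_of_nonneg_left (hr V hV) (hq V)
  have hRne : ∀ g, (R g).Nonempty := by
    intro g
    -- concentrate a sufficiently negative value at `⊤`, which lies in every member of `𝓛`
    obtain ⟨m, hm⟩ : ∃ m : ℝ, ∀ V ∈ LFam L, m ≤ g V := by
      obtain ⟨m, hm⟩ := ((LFam L).image g).finite_toSet.bddBelow
      exact ⟨m, fun V hV => hm (by simpa using ⟨V, hV, rfl⟩)⟩
    refine ⟨_, fun x => if x = ⊤ then m else 0, fun V hV => ?_, rfl⟩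
    rw [Finset.sum_ite_eq', if_pos (top_mem_of_mem_LFam hV)]
    exact hm V hV
  have hweak : ∀ γ' : Finset L → L → ℝ, (∀ V y, 0 ≤ γ' V y) →
      (∀ x, ∑ V ∈ (LFam L).filter (fun V => x ∈ V), ∑ y, γ' V y = φ x) →
      (∀ y, ∑ V ∈ LFam L, γ' V y = fψ y) → ∀ (g : Finset L → ℝ) (h : L → ℝ),
      (∀ V ∈ LFam L, ∀ y : L, w V y ≤ h y - g V) →
      ∑ V ∈ LFam L, ∑ y, γ' V y * w V y ≤ ∑ y, fψ y * h y - sSup (R g) := by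
    intro γ' h0 h1 h2 g h hgh
    have hs : sSup (R g) ≤ ∑ V ∈ LFam L, (∑ y, γ' V y) * g V :=
      csSup_le (hRne g) (hR _ (fun V => Finset.sum_nonneg fun y _ => h0 V y) h1 g)
    have hh : ∑ y, fψ y * h y = ∑ V ∈ LFam L, ∑ y, γ' V y * h y := by
      rw [Finset.sum_comm]
      simp only [← Finset.sum_mul, h2]
    have hle : ∑ V ∈ LFam L, ∑ y, γ' V y * w V y ≤
        ∑ V ∈ LFam L, ∑ y, γ' V y * (h y - g V) :=
      Finset.sum_le_sum fun V hV => Finset.sum_le_sum fun y _ =>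
        mul_le_mul_of_nonneg_left (hgh V hV y) (h0 V y)
    simp only [mul_sub, Finset.sum_sub_distrib, ← Finset.sum_mul, ← hh] at hle
    linarith
  -- the optimal multipliers: `h` from the `ψ`-constraints, `-r` from the `φ`-constraints
  let h : L → ℝ := fun y => z (Sum.inr y)
  let r : L → ℝ := fun x => - z (Sum.inl x)
  let g : Finset L → ℝ := fun V => ∑ x ∈ V, r x
  have hgh : ∀ V ∈ LFam L, ∀ y : L, w V y ≤ h y - g V := by
    intro V hV y
    have := hz (V, y) (by simpa [s] using hV)
    simpa [A, h, g, r, Fintype.sum_sum_type, add_comm] using this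
  have hval : ∑ y, fψ y * h y - sSup (R g) ≤ ∑ V ∈ LFam L, ∑ y, γ (V, y) * w V y := by
    have h1 : ∑ x, r x * φ x ≤ sSup (R g) :=
      le_csSup ⟨_, hR p hp hpφ g⟩ ⟨r, fun V _ => le_rfl, rfl⟩
    rw [Finset.sum_product] at hzt
    simp only [Fintype.sum_sum_type, Sum.elim_inl, Sum.elim_inr] at hzt
    simp only [r, neg_mul, Finset.sum_neg_distrib] at h1
    have h2 : ∑ y, fψ y * h y = ∑ y, z (Sum.inr y) * fψ y :=
      Finset.sum_congr rfl fun y _ => mul_comm _ _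
    linarith
  have hopt := hweak (fun V y => γ (V, y)) (fun V y => hγ0 _) hγφ hγf g h hgh
  refine ⟨∑ V ∈ LFam L, ∑ y, γ (V, y) * w V y, ⟨?_, ?_⟩, ⟨?_, ?_⟩⟩
  · refine ⟨fun V y => γ (V, y), fun V y => hγ0 _, htot _ hγφ, hγφ, fun y₀ => ?_, rfl⟩
    rw [Finset.sum_comm, hfψ y₀]
    exact Finset.sum_congr rfl fun y _ => hγf y
  · rintro _ ⟨γ', h0, -, h1, h2, rfl⟩
    refine (hweak γ' h0 h1 (fun y => ?_) g h hgh).trans hval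
    refine congrFun (eq_of_sum_le_eq (fun y => ∑ V ∈ LFam L, γ' V y) fψ fun y₀ => ?_) y
    rw [← hfψ y₀, ← h2 y₀, Finset.sum_comm]
  · exact ⟨g, h, hgh, le_antisymm hopt hval⟩
  · rintro _ ⟨g', h', hgh', rfl⟩
    exact hweak (fun V y => γ (V, y)) (fun V y => hγ0 _) hγφ hγf g' h' hgh'
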